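/- Let ((f_n),(τ_n)) be a p-ASF for the Banach space X. Then there exist a Banach space X₁ over 𝕂, a linear isometric embedding J : X → X₁, a bounded linear idempotent P : X₁ → X₁ whose range equals J(X), and a p-approximate Riesz basis ((g_n),(ω_n)) for X₁ such that g_n(J x) = f_n(x) for all n ∈ ℕ and x ∈ X, and P ω_n = J τ_n for all n ∈ ℕ. -/

import Mathlib

open Filter
open scoped ENNReal

universe u v

variable {𝕂 : Type u} [RCLike 𝕂]

/-- A pair `((g_n), (ω_n))` is a p-approximate Riesz basis for the Banach space `Y`: it is a
p-ASF (bounded analysis operator `θ_g`, bounded synthesis operator `θ_ω`, invertible frame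
operator `S_g = θ_ω θ_g`) with in addition `θ_g S_g⁻¹ θ_ω = I` on `ℓ^p(ℕ)`. -/
def IsPApproxRieszBasis (p : ℝ≥0∞) [Fact (1 ≤ p)] (Y : Type*) [NormedAddCommGroup Y]
    [NormedSpace 𝕂 Y] (g : ℕ → Y →L[𝕂] 𝕂) (ω : ℕ → Y) : Prop :=
  ∃ (θg : Y →L[𝕂] lp (fun _ : ℕ => 𝕂) p) (θω : lp (fun _ : ℕ => 𝕂) p →L[𝕂] Y)
    (Sg : Y ≃L[𝕂] Y),
    (∀ (x : Y) (n : ℕ), θg x n = g n x) ∧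
    (∀ a : lp (fun _ : ℕ => 𝕂) p,
      Tendsto (fun N => ∑ n ∈ Finset.range N, a n • ω n) atTop (nhds (θω a))) ∧
    (Sg : Y →L[𝕂] Y) = θω.comp θg ∧
    θg.comp ((Sg.symm : Y →L[𝕂] Y).comp θω) =
      ContinuousLinearMap.id 𝕂 (lp (fun _ : ℕ => 𝕂) p)

/-!
Since `θτ θf = S` is invertible, `θf S⁻¹` is a right inverse of the synthesis operator `θτ`, so
`ℓ^p ≃ X × ker θτ` via an isomorphism `e` with first component `θτ`. The dilation lives on this
product: take `θω = e` and let the frame operator be `S × id`, which forces `θg = e⁻¹ (S × id)`.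
Then `θg (S × id)⁻¹ θω = e⁻¹ e = id`.
-/

section Coordinates

variable {𝕜 ι : Type*} [NormedRing 𝕜] [DecidableEq ι] {p : ℝ≥0∞}

theorem lp_hasSum_smul_single [Fact (1 ≤ p)] (hp : p ≠ ⊤) (a : lp (fun _ : ι => 𝕜) p) :
    HasSum (fun i => a i • lp.single p i (1 : 𝕜)) a := by
  simpa only [← lp.single_smul, smul_eq_mul, mul_one] using lp.hasSum_single hp a

theorem apply_lp_single_of_tendsto_sum {X : Type*} [AddCommMonoid X] [Module 𝕜 X]
    [TopologicalSpace X] [T2Space X] {τ : ℕ → X} {T : lp (fun _ : ℕ => 𝕜) p → X}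
    (hT : ∀ a, Tendsto (fun N => ∑ n ∈ Finset.range N, a n • τ n) atTop (nhds (T a))) (n : ℕ) :
    T (lp.single p n 1) = τ n := by
  have eventually_eq : ∀ᶠ N in atTop,
      τ n = ∑ m ∈ Finset.range N, (lp.single p n 1 : lp (fun _ : ℕ => 𝕜) p) m • τ m := by
    filter_upwards [eventually_gt_atTop n] with N hN
    simp [Pi.single_apply, ite_smul, hN]
  exact tendsto_nhds_unique (hT _) (tendsto_const_nhds.congr' eventually_eq)

end Coordinates

section Splitting

variable {R X E : Type*} [Ring R] [TopologicalSpace X] [AddCommGroup X] [Module R X]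
  [TopologicalSpace E] [AddCommGroup E] [Module R E]
  {A : X →L[R] E} {B : E →L[R] X} {S : X ≃L[R] X}

theorem rightInverse_comp_symm_of_eq_comp (hS : (S : X →L[R] X) = B.comp A) :
    Function.RightInverse (A.comp (S.symm : X →L[R] X)) B := fun x =>
  calc B (A (S.symm x)) = S (S.symm x) := (DFunLike.congr_fun hS (S.symm x)).symm
    _ = x := S.apply_symm_apply x

variable [IsTopologicalAddGroup E]

/-- The splitting `E ≃ X × ker B` of the coefficient space `E` of a frame with analysis operator
`A`, synthesis operator `B` and invertible frame operator `S = B A`, given by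
`a ↦ (B a, a - A S⁻¹ B a)`. -/
def frameSplitting (hS : (S : X →L[R] X) = B.comp A) : E ≃L[R] X × B.ker :=
  ContinuousLinearEquiv.equivOfRightInverse B (A.comp (S.symm : X →L[R] X))
    (rightInverse_comp_symm_of_eq_comp hS)

theorem fst_frameSplitting (hS : (S : X →L[R] X) = B.comp A) (a : E) :
    (frameSplitting hS a).1 = B a :=
  rfl

theorem frameSplitting_symm_apply (hS : (S : X →L[R] X) = B.comp A) (x : X) (k : B.ker) :
    (frameSplitting hS).symm (S x, k) = A x + k := by
  simp [frameSplitting]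

end Splitting

theorem isPApproxRieszBasis_of_equiv {p : ℝ≥0∞} [Fact (1 ≤ p)] (hp : p ≠ ⊤) {Y : Type*}
    [NormedAddCommGroup Y] [NormedSpace 𝕂 Y] (e : lp (fun _ : ℕ => 𝕂) p ≃L[𝕂] Y)
    (T : Y ≃L[𝕂] Y) :
    IsPApproxRieszBasis p Y
      (fun n => (lp.evalCLM 𝕂 (fun _ : ℕ => 𝕂) p n).comp (T.trans e.symm : Y →L[𝕂] _))
      (fun n => e (lp.single p n 1)) := by
  refine ⟨(T.trans e.symm : Y →L[𝕂] _), e, T, fun _ _ => rfl, fun a => ?_, ?_, ?_⟩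
  · simpa using ((lp_hasSum_smul_single hp a).mapL (e : _ →L[𝕂] Y)).tendsto_sum_nat
  · ext y
    simp
  · ext1 a
    simp

/-- **Dilation theorem for p-approximate Schauder frames.** Every p-ASF `((f_n), (τ_n))` for a
Banach space `X` dilates to a p-approximate Riesz basis `((g_n), (ω_n))` for a Banach space `X₁`
containing `X` isometrically (via `J`), with a bounded idempotent `P` on `X₁` with range `J(X)`
such that `g_n ∘ J = f_n` and `P ω_n = J τ_n` for all `n`. -/
theorem pASF_dilation {X : Type v} [NormedAddCommGroup X] [NormedSpace 𝕂 X] [CompleteSpace X]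
    (p : ℝ≥0∞) [Fact (1 ≤ p)] (hp : p ≠ ⊤)
    (f : ℕ → X →L[𝕂] 𝕂) (τ : ℕ → X)
    (θf : X →L[𝕂] lp (fun _ : ℕ => 𝕂) p) (θτ : lp (fun _ : ℕ => 𝕂) p →L[𝕂] X)
    (S : X ≃L[𝕂] X)
    (hθf : ∀ (x : X) (n : ℕ), θf x n = f n x)
    (hθτ : ∀ a : lp (fun _ : ℕ => 𝕂) p,
      Tendsto (fun N => ∑ n ∈ Finset.range N, a n • τ n) atTop (nhds (θτ a)))
    (hS : (S : X →L[𝕂] X) = θτ.comp θf) :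
    ∃ (X₁ : Type (max u v)) (_ : NormedAddCommGroup X₁) (_ : NormedSpace 𝕂 X₁)
      (_ : CompleteSpace X₁) (J : X →ₗᵢ[𝕂] X₁) (P : X₁ →L[𝕂] X₁)
      (g : ℕ → X₁ →L[𝕂] 𝕂) (ω : ℕ → X₁),
      P.comp P = P ∧
      Set.range ⇑P = Set.range ⇑J ∧
      IsPApproxRieszBasis p X₁ g ω ∧
      (∀ (n : ℕ) (x : X), g n (J x) = f n x) ∧
      (∀ n : ℕ, P (ω n) = J (τ n)) := by
  let K := θτ.ker
  have : CompleteSpace K := θτ.isClosed_ker.completeSpace_coe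
  let e : lp (fun _ : ℕ => 𝕂) p ≃L[𝕂] X × K := frameSplitting hS
  let T : (X × K) ≃L[𝕂] X × K := S.prodCongr (.refl 𝕂 K)
  let P : X × K →L[𝕂] X × K := (ContinuousLinearMap.inl 𝕂 X K).comp (.fst 𝕂 X K)
  have range_P : Set.range P = Set.range (LinearIsometry.inl 𝕂 X K) :=
    Prod.fst_surjective.range_comp (LinearIsometry.inl 𝕂 X K)
  have analysis_inl (x : X) : e.symm (T (x, 0)) = θf x :=
    (frameSplitting_symm_apply hS x 0).trans (add_zero (θf x))
  have P_synthesis (n : ℕ) : P (e (lp.single p n 1)) = (τ n, 0) := by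
    rw [← apply_lp_single_of_tendsto_sum hθτ n, ← fst_frameSplitting hS]
    rfl
  refine ⟨X × K, inferInstance, inferInstance, inferInstance, LinearIsometry.inl 𝕂 X K, P, _, _,
    rfl, range_P, isPApproxRieszBasis_of_equiv hp e T, fun n x => ?_, P_synthesis⟩
  rw [← hθf, ← analysis_inl]
  rfl
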